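/- Let p ≥ 7 be a prime with p ≡ 3 (mod 4). Then in ℤ_(p)[i]: G_p(p) ≡ −(p⁵/12)·(p−1)²(p−2)·B_{p−3}·(1−i) (mod p⁶), where B_{p−3} is the (p−3)-rd Bernoulli number (p-integral since (p−1) ∤ (p−3)). In particular p⁵ divides G_p(p) in ℤ[i]. -/

import Mathlib

noncomputable section

/-- `i` in the Gaussian integers. -/
def Ig : GaussianInt := ⟨0, 1⟩

/-- Classical power sum `S_r(N) = ∑_{t=1}^N t^r`. -/
def Sps (r N : ℕ) : ℤ := ∑ t ∈ Finset.Icc 1 N, (t : ℤ) ^ r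

/-- Gaussian power sum `F_n(k,m) = ∑_{a=1}^k ∑_{b=1}^m (a+bi)^n`. -/
def Fg (n k m : ℕ) : GaussianInt :=
  ∑ a ∈ Finset.Icc 1 k, ∑ b ∈ Finset.Icc 1 m, ((a : GaussianInt) + (b : GaussianInt) * Ig) ^ n

/-- Square Gaussian power sum `G_n(N) = F_n(N-1,N-1)`. -/
def Gg (n N : ℕ) : GaussianInt := Fg n (N - 1) (N - 1)

section PowerSums

open Finset

lemma two_mul_cast_choose_two (n : ℕ) : 2 * (n.choose 2 : ℤ) = n * (n - 1) := by
  induction n with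
  | zero => simp
  | succ n ih =>
    rw [Nat.choose_succ_succ' n 1, Nat.choose_one_right]
    push_cast
    linear_combination ih

lemma six_mul_cast_choose_three (n : ℕ) :
    6 * (n.choose 3 : ℤ) = n * (n - 1) * (n - 2) := by
  induction n with
  | zero => simp
  | succ n ih =>
    rw [Nat.choose_succ_succ' n 2]
    push_cast
    linear_combination ih + 3 * two_mul_cast_choose_two n

lemma sum_range_two_mul_eq_sum_pairs {M : Type*} [AddCommMonoid M] (f : ℕ → M) (n : ℕ) :
    ∑ k ∈ range (2 * n), f k = ∑ j ∈ range n, (f (2 * j) + f (2 * j + 1)) := by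
  induction n with
  | zero => simp
  | succ n ih =>
    rw [Nat.mul_succ, sum_range_succ, sum_range_succ, ih, sum_range_succ, add_assoc]

lemma Sps_zero (N : ℕ) : Sps 0 N = N := by simp [Sps]

/-- Reflecting `t ↦ p - t` expresses an odd power sum through those of lower degree. -/
lemma two_mul_Sps_odd (p a : ℕ) :
    2 * Sps (2 * a + 1) (p - 1) = ∑ j ∈ range (2 * a + 1),
      (-1) ^ j * ((2 * a + 1).choose (j + 1) : ℤ) * (p : ℤ) ^ (j + 1) *
        Sps (2 * a - j) (p - 1) := by
  have hreflect : Sps (2 * a + 1) (p - 1) =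
      ∑ t ∈ Icc 1 (p - 1), ((p : ℤ) + -(t : ℤ)) ^ (2 * a + 1) := by
    unfold Sps
    refine sum_nbij' (fun t => p - t) (fun t => p - t) ?_ ?_ ?_ ?_ ?_
    · intro t ht; rw [mem_Icc] at *; omega
    · intro t ht; rw [mem_Icc] at *; omega
    · intro t ht; rw [mem_Icc] at *; omega
    · intro t ht; rw [mem_Icc] at *; omega
    · intro t ht
      rw [mem_Icc] at ht
      rw [Nat.cast_sub (by omega)]
      congr 1
      ring
  have hexpand : Sps (2 * a + 1) (p - 1) =
      (∑ j ∈ range (2 * a + 1),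
        (-1) ^ j * ((2 * a + 1).choose (j + 1) : ℤ) * (p : ℤ) ^ (j + 1) *
          Sps (2 * a - j) (p - 1)) - Sps (2 * a + 1) (p - 1) := by
    conv_lhs => rw [hreflect]
    simp_rw [add_pow]
    rw [sum_comm, sum_range_succ', sub_eq_add_neg]
    congr 1
    · refine sum_congr rfl fun j hj => ?_
      have hj' : j ≤ 2 * a := by rw [mem_range] at hj; omega
      have hsign : (-1 : ℤ) ^ (2 * a - j) = (-1) ^ j := by
        rcases Nat.even_or_odd j with h | h
        · rw [h.neg_one_pow, Even.neg_one_pow (by grind)]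
        · rw [h.neg_one_pow, Odd.neg_one_pow (by grind)]
      rw [Sps, mul_sum]
      refine sum_congr rfl fun t _ => ?_
      rw [show 2 * a + 1 - (j + 1) = 2 * a - j by omega, neg_pow (t : ℤ), hsign]
      ring
    · rw [Sps, ← sum_neg_distrib]
      refine sum_congr rfl fun t _ => ?_
      rw [Nat.sub_zero, Odd.neg_pow ⟨a, rfl⟩]
      simp
  linarith

lemma prime_dvd_Sps {p k : ℕ} [Fact p.Prime] (hk : 0 < k) (hkp : k < p - 1) :
    (p : ℤ) ∣ Sps k (p - 1) := by
  rw [← ZMod.intCast_zmod_eq_zero_iff_dvd]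
  have hsum := FiniteField.sum_pow_lt_card_sub_one (ZMod p) k (by rwa [ZMod.card])
  have hp : 0 < p := (Fact.out : p.Prime).pos
  rw [← hsum, Sps]
  push_cast
  have hrange : ∑ x : ZMod p, x ^ k = ∑ t ∈ range p, (t : ZMod p) ^ k := by
    symm
    refine sum_nbij (fun t => (t : ZMod p)) (by simp) ?_ ?_ (by simp)
    · intro s hs t ht hst
      simp only [coe_range, Set.mem_Iio] at hs ht
      have := congrArg ZMod.val hst
      simpa [ZMod.val_cast_of_lt hs, ZMod.val_cast_of_lt ht] using this
    · intro x _
      exact ⟨x.val, by simp [ZMod.val_lt], by simp⟩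
  rw [hrange]
  refine sum_subset ?_ ?_
  · intro t ht; rw [mem_Icc] at ht; rw [mem_range]; omega
  · intro t ht ht'
    rw [mem_range] at ht
    rw [mem_Icc] at ht'
    obtain rfl : t = 0 := by omega
    simp [hk.ne']

/-- The defect `2 S_n - p n S_{n-1}` of an odd power sum, in degree `n = 2a + 1`. -/
def oddDefect (p a : ℕ) : ℤ :=
  2 * Sps (2 * a + 1) (p - 1) - p * (2 * a + 1) * Sps (2 * a) (p - 1)

lemma oddDefect_eq_sum (p a : ℕ) :
    oddDefect p a = ∑ j ∈ range (2 * a),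
      (-1) ^ (j + 1) * ((2 * a + 1).choose (j + 2) : ℤ) * (p : ℤ) ^ (j + 2) *
        Sps (2 * a - (j + 1)) (p - 1) := by
  rw [oddDefect, two_mul_Sps_odd, sum_range_succ']
  simp only [zero_add, pow_zero, one_mul, Nat.choose_one_right, pow_one, Nat.sub_zero]
  push_cast
  ring

lemma isCoprime_prime_pow {p n : ℕ} [hp : Fact p.Prime] (hn : n ≠ 0) (hnp : n < p) (k : ℕ) :
    IsCoprime ((p : ℤ) ^ k) (n : ℤ) :=
  IsCoprime.pow_left (Nat.isCoprime_iff_coprime.mpr (Nat.coprime_of_lt_prime hn hnp hp.out))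

lemma oddDefect_zero {p : ℕ} : oddDefect p 0 = 0 := by
  simp [oddDefect_eq_sum]

lemma two_mul_oddDefect_one {p : ℕ} (hp : 0 < p) :
    2 * oddDefect p 1 = -((p : ℤ) ^ 3 * (p - 1)) := by
  have hlinear := two_mul_Sps_odd p 0
  simp only [mul_zero, zero_add, sum_range_one, Nat.sub_zero, Sps_zero] at hlinear
  rw [oddDefect_eq_sum]
  simp only [mul_one, sum_range_succ, sum_range_zero]
  norm_num [Nat.choose, Sps_zero] at hlinear ⊢
  push_cast [Nat.cast_sub (show 1 ≤ p from hp)] at hlinear ⊢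
  linear_combination (-3 * (p : ℤ) ^ 2) * hlinear

lemma sq_dvd_oddDefect (p a : ℕ) : (p : ℤ) ^ 2 ∣ oddDefect p a := by
  rw [oddDefect_eq_sum]
  exact dvd_sum fun j _ => ((pow_dvd_pow _ (by omega)).mul_left _).mul_right _

lemma sq_dvd_Sps_odd {p a : ℕ} [Fact p.Prime] (ha : 0 < a) (hap : 2 * a + 1 < p) :
    (p : ℤ) ^ 2 ∣ Sps (2 * a + 1) (p - 1) := by
  refine (isCoprime_prime_pow (p := p) (n := 2) two_ne_zero (by omega) 2).dvd_of_dvd_mul_left ?_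
  have hdefect := sq_dvd_oddDefect p a
  obtain ⟨c, hc⟩ := prime_dvd_Sps (p := p) (k := 2 * a) (by omega) (by omega)
  rw [oddDefect, hc] at hdefect
  have := dvd_add hdefect (Dvd.intro ((2 * a + 1) * c) rfl : (p : ℤ) ^ 2 ∣ _)
  convert this using 1
  push_cast
  ring

lemma pow_four_dvd_oddDefect {p a : ℕ} [Fact p.Prime] (ha : 2 ≤ a) (hap : 2 * a + 1 < p) :
    (p : ℤ) ^ 4 ∣ oddDefect p a := by
  obtain ⟨b, rfl⟩ := Nat.exists_eq_add_of_le' ha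
  rw [oddDefect_eq_sum, show 2 * (b + 2) = 2 * b + 2 + 1 + 1 by ring, sum_range_succ',
    sum_range_succ']
  refine dvd_add (dvd_add ?_ ?_) ?_
  · exact dvd_sum fun j _ => ((pow_dvd_pow _ (by omega)).mul_left _).mul_right _
  · rw [show (p : ℤ) ^ 4 = p ^ 3 * p by ring]
    refine mul_dvd_mul (Dvd.intro_left _ rfl) (prime_dvd_Sps (by omega) (by omega))
  · rw [show (p : ℤ) ^ 4 = p ^ 2 * p ^ 2 by ring]
    refine mul_dvd_mul (Dvd.intro_left _ rfl) ?_
    exact sq_dvd_Sps_odd (a := b + 1) (by omega) (by omega)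

/-- The defect in degree `p` modulo `p ^ 6`. -/
lemma pow_six_dvd_oddDefect_self {p a : ℕ} [hp : Fact p.Prime] (hp7 : 7 ≤ p)
    (hpa : p = 2 * a + 1) :
    (p : ℤ) ^ 6 ∣ 12 * oddDefect p a + (p - 1) * (p - 2) * p ^ 4 * Sps (2 * a - 2) (p - 1) := by
  obtain ⟨c, rfl⟩ : ∃ c, a = c + 3 := ⟨a - 3, by omega⟩
  have hrest : (p : ℤ) ^ 6 ∣ ∑ j ∈ range (2 * c + 4),
      (-1) ^ (j + 1 + 1 + 1) * ((2 * (c + 3) + 1).choose (j + 1 + 1 + 2) : ℤ) *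
        (p : ℤ) ^ (j + 1 + 1 + 2) * Sps (2 * (c + 3) - (j + 1 + 1 + 1)) (p - 1) := by
    refine dvd_sum fun j hj => ?_
    rw [mem_range] at hj
    rcases Nat.lt_or_ge (j + 4) p with hjp | hjp
    · obtain ⟨q, hq⟩ : (p : ℤ) ∣ ((2 * (c + 3) + 1).choose (j + 1 + 1 + 2) : ℤ) := by
        rw [← hpa]
        exact_mod_cast hp.out.dvd_choose_self (by omega) hjp
      rw [hq]
      rcases Nat.eq_zero_or_pos j with rfl | hj0
      · obtain ⟨s, hs⟩ := prime_dvd_Sps (p := p) (k := 2 * (c + 3) - (0 + 1 + 1 + 1))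
          (by omega) (by omega)
        rw [hs]
        exact ⟨-(q * s), by ring⟩
      · obtain ⟨i, rfl⟩ : ∃ i, j = i + 1 := ⟨j - 1, by omega⟩
        exact ⟨(-1) ^ i * q * p ^ i * Sps (2 * (c + 3) - (i + 1 + 1 + 1 + 1)) (p - 1), by ring⟩
    · exact ((pow_dvd_pow _ (by omega)).mul_left _).mul_right _
  have hlower : (p : ℤ) ^ 6 ∣ p ^ 3 * oddDefect p (c + 2) := by
    have := pow_four_dvd_oddDefect (p := p) (a := c + 2) (by omega) (by omega)
    exact (pow_dvd_pow _ (by norm_num)).trans (pow_add (p : ℤ) 3 4 ▸ mul_dvd_mul_left _ this)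
  have htwo := two_mul_cast_choose_two p
  have hthree := six_mul_cast_choose_three p
  have hcast : (p : ℤ) = 2 * c + 7 := by rw [hpa]; push_cast; ring
  suffices hsplit : 12 * oddDefect p (c + 3) +
      (p - 1) * (p - 2) * p ^ 4 * Sps (2 * (c + 3) - 2) (p - 1) = _ from
    hsplit ▸ dvd_add (hrest.mul_left 12) (hlower.mul_left (-3 * (p - 1)))
  rw [oddDefect_eq_sum p (c + 3), show range (2 * (c + 3)) = range (2 * c + 4 + 1 + 1) by rfl,
    sum_range_succ', sum_range_succ', oddDefect, ← hpa,
    show 2 * (c + 3) - (0 + 1 + 1) = 2 * c + 4 by omega,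
    show 2 * (c + 3) - (0 + 1) = 2 * c + 5 by omega, show 2 * (c + 2) = 2 * c + 4 by ring,
    show 2 * c + 4 + 1 = 2 * c + 5 by ring]
  push_cast
  linear_combination (2 * (p : ℤ) ^ 3 * Sps (2 * c + 4) (p - 1)) * hthree -
    (6 * (p : ℤ) ^ 2 * Sps (2 * c + 5) (p - 1)) * htwo +
    (3 * (p - 1) * (p : ℤ) ^ 4 * Sps (2 * c + 4) (p - 1)) * hcast

/-- The common factor of the Gaussian power sum: `G_p(p) = (1 - i) * evenPart`, see
`Gg_self_eq`. -/
def evenPart (p m : ℕ) : ℤ :=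
  ∑ j ∈ range (2 * m + 2),
    (-1) ^ j * (p.choose (2 * j) : ℤ) * Sps (2 * j) (p - 1) * Sps (p - 2 * j) (p - 1)

lemma Ig_sq : Ig ^ 2 = -1 := by
  rw [pow_two]; ext <;> simp [Ig]

lemma Fg_eq_sum (n N : ℕ) :
    Fg n N N = ∑ k ∈ range (n + 1),
      ((n.choose k * Sps k N * Sps (n - k) N : ℤ) : GaussianInt) * Ig ^ k := by
  have hterm (a b : ℕ) : ((a : GaussianInt) + (b : GaussianInt) * Ig) ^ n =
      ∑ k ∈ range (n + 1), (n.choose k : GaussianInt) * Ig ^ k * ((a : GaussianInt) ^ (n - k) *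
        (b : GaussianInt) ^ k) := by
    rw [add_comm, add_pow]
    exact sum_congr rfl fun k _ => by ring
  simp_rw [Fg, hterm, Sps]
  rw [sum_congr rfl fun a _ => sum_comm, sum_comm]
  refine sum_congr rfl fun k _ => ?_
  simp_rw [← mul_sum, ← sum_mul]
  push_cast
  ring

lemma Gg_self_eq {p m : ℕ} (hpm : p = 4 * m + 3) :
    Gg p p = (evenPart p m : GaussianInt) * (1 - Ig) := by
  rw [Gg, Fg_eq_sum, show p + 1 = 2 * (2 * m + 2) by omega, sum_range_two_mul_eq_sum_pairs,
    sum_add_distrib, ← sum_range_reflect (fun j => _ * Ig ^ (2 * j + 1)), ← sum_add_distrib,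
    evenPart, Int.cast_sum, sum_mul]
  refine sum_congr rfl fun j hj => ?_
  rw [mem_range] at hj
  have hodd : 2 * (2 * m + 2 - 1 - j) + 1 = p - 2 * j := by omega
  have hsign : (-1 : GaussianInt) ^ (2 * m + 2 - 1 - j) = -(-1) ^ j := by
    rcases Nat.even_or_odd j with h | h
    · rw [h.neg_one_pow, Odd.neg_one_pow (by grind)]
    · rw [h.neg_one_pow, Even.neg_one_pow (by grind), neg_neg]
  rw [pow_succ Ig, pow_mul, pow_mul, Ig_sq, hsign, hodd, Nat.choose_symm (by omega),
    Nat.sub_sub_self (by omega)]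
  push_cast
  ring

lemma two_mul_evenPart {p m : ℕ} (hpm : p = 4 * m + 3) :
    2 * evenPart p m = ∑ j ∈ range (2 * m + 2),
      (-1) ^ j * (p.choose (2 * j) : ℤ) * Sps (2 * j) (p - 1) *
        oddDefect p (2 * m + 1 - j) := by
  set f : ℕ → ℤ := fun j => (-1) ^ j * (p.choose (2 * j) : ℤ) * Sps (2 * j) (p - 1) *
    (p * (p - 2 * j) * Sps (2 * (2 * m + 1 - j)) (p - 1)) with hf
  have hanti : ∑ j ∈ range (2 * m + 2), f j = 0 := by
    have hreflect := sum_range_reflect f (2 * m + 2)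
    have hneg : ∑ j ∈ range (2 * m + 2), f (2 * m + 2 - 1 - j) =
        ∑ j ∈ range (2 * m + 2), -f j := by
      refine sum_congr rfl fun j hj => ?_
      rw [mem_range] at hj
      have hsign : (-1 : ℤ) ^ (2 * m + 1 - j) = -(-1) ^ j := by
        rcases Nat.even_or_odd j with h | h
        · rw [h.neg_one_pow, Odd.neg_one_pow (by grind)]
        · rw [h.neg_one_pow, Even.neg_one_pow (by grind), neg_neg]
      have hchoose : (p.choose (2 * (2 * m + 1 - j)) : ℤ) * (2 * j + 1) =
          p.choose (2 * j) * (p - 2 * j) := by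
        have h := Nat.choose_succ_right_eq p (2 * j)
        rw [← Nat.choose_symm (show 2 * j + 1 ≤ p by omega),
          show p - (2 * j + 1) = 2 * (2 * m + 1 - j) by omega] at h
        have h' := congrArg (Nat.cast : ℕ → ℤ) h
        push_cast [Nat.cast_sub (show 2 * j ≤ p by omega)] at h'
        exact h'
      have hpj : (p : ℤ) - 2 * ((2 * m + 1 - j : ℕ) : ℤ) = 2 * j + 1 := by omega
      simp only [hf, show 2 * m + 2 - 1 - j = 2 * m + 1 - j by omega, hsign, hpj,
        show 2 * m + 1 - (2 * m + 1 - j) = j by omega]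
      linear_combination (-(-1) ^ j * Sps (2 * (2 * m + 1 - j)) (p - 1) * p *
        Sps (2 * j) (p - 1)) * hchoose
    rw [hneg, sum_neg_distrib] at hreflect
    linarith
  rw [← sub_zero (2 * evenPart p m), ← hanti, evenPart, mul_sum, ← sum_sub_distrib]
  refine sum_congr rfl fun j hj => ?_
  rw [mem_range] at hj
  have hpj : 2 * ((2 * m + 1 - j : ℕ) : ℤ) + 1 = p - 2 * j := by omega
  rw [hf, oddDefect, hpj, show 2 * (2 * m + 1 - j) + 1 = p - 2 * j by omega]
  ring

lemma pow_six_dvd_evenPart {p m : ℕ} [hp : Fact p.Prime] (hp7 : 7 ≤ p) (hpm : p = 4 * m + 3) :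
    (p : ℤ) ^ 6 ∣ 12 * evenPart p m + (p - 1) ^ 2 * (p - 2) * p ^ 4 * Sps (p - 3) (p - 1) := by
  obtain ⟨n, hn⟩ : ∃ n, 2 * m = n + 2 := ⟨2 * m - 2, by omega⟩
  have hmiddle : (p : ℤ) ^ 6 ∣ ∑ j ∈ range (n + 1),
      (-1) ^ (j + 1) * (p.choose (2 * (j + 1)) : ℤ) * Sps (2 * (j + 1)) (p - 1) *
        oddDefect p (2 * m + 1 - (j + 1)) := by
    refine dvd_sum fun j hj => ?_
    rw [mem_range] at hj
    have hchoose : (p : ℤ) ∣ (p.choose (2 * (j + 1)) : ℤ) := by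
      exact_mod_cast hp.out.dvd_choose_self (by omega) (by omega)
    rw [show (p : ℤ) ^ 6 = p * p * p ^ 4 by ring]
    exact mul_dvd_mul (mul_dvd_mul (hchoose.mul_left _) (prime_dvd_Sps (by omega) (by omega)))
      (pow_four_dvd_oddDefect (by omega) (by omega))
  have htop := pow_six_dvd_oddDefect_self (p := p) (a := 2 * m + 1) hp7 (by omega)
  have hthree := six_mul_cast_choose_three p
  have hcubic := two_mul_oddDefect_one (p := p) (by omega)
  have htwice := two_mul_evenPart hpm
  rw [sum_range_succ, Nat.sub_self, oddDefect_zero, hn, sum_range_succ, sum_range_succ',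
    show n + 2 + 1 - (n + 1 + 1) = 1 by omega, ← hn] at htwice
  have hS : 2 * (2 * m) = p - 3 := by omega
  rw [hS, Nat.choose_symm (show 3 ≤ p by omega), (even_two_mul m).neg_one_pow] at htwice
  rw [show 2 * (2 * m + 1) - 2 = p - 3 by omega] at htop
  refine (isCoprime_prime_pow (p := p) (n := 2) two_ne_zero (by omega) 6).dvd_of_dvd_mul_left ?_
  refine (dvd_add (hmiddle.mul_left 12) (htop.mul_left (p - 1))).trans (dvd_of_eq ?_)
  simp only [mul_zero, pow_zero, Nat.choose_zero_right, Sps_zero, Nat.sub_zero] at htwice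
  push_cast [Nat.cast_sub (show 1 ≤ p by omega)] at htwice ⊢
  linear_combination (-12) * htwice - (Sps (p - 3) (p - 1) * 2 * oddDefect p 1) * hthree -
    (Sps (p - 3) (p - 1) * p * (p - 1) * (p - 2)) * hcubic

end PowerSums

section Bernoulli

open Finset

variable {p : ℕ} [hp : Fact p.Prime]

lemma norm_natCast_eq_one_of_lt {n : ℕ} (hn : n ≠ 0) (hnp : n < p) : ‖(n : ℚ_[p])‖ = 1 :=
  Padic.norm_natCast_eq_one_iff.mpr (Nat.coprime_of_lt_prime hn hnp hp.out)

lemma norm_natCast_le_one (n : ℕ) : ‖(n : ℚ_[p])‖ ≤ 1 := by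
  exact_mod_cast Padic.norm_int_le_one (p := p) n

lemma norm_bernoulli'_le_one {n : ℕ} (hn : n + 1 < p) : ‖((bernoulli' n : ℚ) : ℚ_[p])‖ ≤ 1 := by
  induction n using Nat.strong_induction_on with
  | _ n ih =>
    rw [bernoulli'_def]
    push_cast
    rw [sub_eq_add_neg]
    refine (Padic.nonarchimedean _ _).trans (max_le (by simp) ?_)
    rw [norm_neg]
    refine IsUltrametricDist.norm_sum_le_of_forall_le_of_nonneg zero_le_one fun k hk => ?_
    rw [mem_range] at hk
    have hcast : (n : ℚ_[p]) - k + 1 = ((n - k + 1 : ℕ) : ℚ_[p]) := by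
      push_cast [Nat.cast_sub hk.le]; ring
    rw [hcast, norm_mul, norm_div,
      norm_natCast_eq_one_of_lt (n := n - k + 1) (by omega) (by omega), div_one]
    exact mul_le_one₀ (norm_natCast_le_one _) (norm_nonneg _) (ih k hk (by omega))

lemma norm_bernoulli_le_one {n : ℕ} (hn : n + 1 < p) : ‖((bernoulli n : ℚ) : ℚ_[p])‖ ≤ 1 := by
  rw [bernoulli]
  push_cast
  simpa using norm_bernoulli'_le_one hn

lemma norm_Sps_sub_le {n : ℕ} (hn : 0 < n) (hnp : n + 1 < p) :
    ‖((Sps n (p - 1) : ℤ) : ℚ_[p]) - p * ((bernoulli n : ℚ) : ℚ_[p])‖ ≤ (p : ℝ) ^ (-(2 : ℤ)) := by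
  have hSps : ((Sps n (p - 1) : ℤ) : ℚ) = ∑ k ∈ range p, (k : ℚ) ^ n := by
    rw [Sps]
    push_cast
    refine sum_subset ?_ ?_
    · intro t ht; rw [mem_Icc] at ht; rw [mem_range]; omega
    · intro t ht ht'
      rw [mem_range] at ht
      rw [mem_Icc] at ht'
      obtain rfl : t = 0 := by omega
      simp [hn.ne']
  have hn1 : (n : ℚ) + 1 ≠ 0 := by positivity
  have hfaulhaber : ((Sps n (p - 1) : ℤ) : ℚ) - p * bernoulli n = ∑ i ∈ range n,
      bernoulli i * ((n + 1).choose i) * (p : ℚ) ^ (n + 1 - i) / ((n + 1 : ℕ) : ℚ) := by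
    rw [hSps, sum_range_pow, sum_range_succ]
    simp only [Nat.add_sub_cancel_left, Nat.choose_succ_self_right]
    push_cast
    field_simp
    ring
  have hcast := congrArg (Rat.cast : ℚ → ℚ_[p]) hfaulhaber
  push_cast at hcast
  rw [hcast]
  refine IsUltrametricDist.norm_sum_le_of_forall_le_of_nonneg (by positivity) fun i hi => ?_
  rw [mem_range] at hi
  have hden : ‖(n : ℚ_[p]) + 1‖ = 1 := by
    exact_mod_cast norm_natCast_eq_one_of_lt (p := p) (n := n + 1) (by omega) hnp
  rw [norm_div, hden, div_one, norm_mul, norm_mul, Padic.norm_p_pow]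
  have hle : (p : ℝ) ^ (-((n + 1 - i : ℕ) : ℤ)) ≤ (p : ℝ) ^ (-(2 : ℤ)) :=
    zpow_le_zpow_right₀ (by exact_mod_cast hp.out.one_le) (by omega)
  have hcoeff := mul_le_one₀ (norm_bernoulli_le_one (p := p) (n := i) (by omega))
    (norm_nonneg _) (norm_natCast_le_one (p := p) ((n + 1).choose i))
  exact (mul_le_of_le_one_left (by positivity) hcoeff).trans hle

/-- The `p`-adic form of the congruence for the common factor of `G_p(p)`. -/
lemma norm_evenPart_sub_le {m : ℕ} (hp7 : 7 ≤ p) (hpm : p = 4 * m + 3) :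
    ‖((evenPart p m : ℤ) : ℚ_[p]) - (-((p : ℚ_[p]) ^ 5 / 12) * ((p : ℚ_[p]) - 1) ^ 2 *
      ((p : ℚ_[p]) - 2) * ((bernoulli (p - 3) : ℚ) : ℚ_[p]))‖ ≤ (p : ℝ) ^ (-(6 : ℤ)) := by
  have htwelve : ‖(12 : ℚ_[p])‖ = 1 := by
    have h : ‖((2 * 2 * 3 : ℕ) : ℚ_[p])‖ = 1 := by
      rw [Nat.cast_mul, Nat.cast_mul, norm_mul, norm_mul,
        norm_natCast_eq_one_of_lt (by omega) (by omega),
        norm_natCast_eq_one_of_lt (by omega) (by omega)]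
      norm_num
    exact_mod_cast h
  have hdvd := (Padic.norm_int_le_pow_iff_dvd (p := p) _ 6).mpr
    (by exact_mod_cast pow_six_dvd_evenPart hp7 hpm)
  have hSps := norm_Sps_sub_le (p := p) (n := p - 3) (by omega) (by omega)
  set β : ℚ_[p] := ((bernoulli (p - 3) : ℚ) : ℚ_[p])
  set σ : ℚ_[p] := ((Sps (p - 3) (p - 1) : ℤ) : ℚ_[p])
  set c : ℤ := -((p - 1) ^ 2 * (p - 2)) with hc
  have hsplit : (12 : ℚ_[p]) * (((evenPart p m : ℤ) : ℚ_[p]) -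
      (-((p : ℚ_[p]) ^ 5 / 12) * ((p : ℚ_[p]) - 1) ^ 2 * ((p : ℚ_[p]) - 2) * β)) =
      ((12 * evenPart p m + (p - 1) ^ 2 * (p - 2) * p ^ 4 * Sps (p - 3) (p - 1) : ℤ) : ℚ_[p]) +
        (c : ℚ_[p]) * ((p : ℚ_[p]) ^ 4 * (σ - p * β)) := by
    rw [hc]
    push_cast
    ring
  rw [← one_mul ‖_ - _‖, ← htwelve, ← norm_mul, hsplit]
  refine (Padic.nonarchimedean _ _).trans (max_le hdvd ?_)
  rw [norm_mul, norm_mul, Padic.norm_p_pow]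
  refine (mul_le_of_le_one_left (by positivity) (Padic.norm_int_le_one c)).trans ?_
  calc (p : ℝ) ^ (-((4 : ℕ) : ℤ)) * ‖σ - p * β‖
      ≤ (p : ℝ) ^ (-((4 : ℕ) : ℤ)) * (p : ℝ) ^ (-(2 : ℤ)) := by gcongr
    _ = (p : ℝ) ^ (-(6 : ℤ)) := by
      rw [← zpow_add₀ (by exact_mod_cast hp.out.ne_zero)]
      norm_num

lemma pow_five_dvd_evenPart {m : ℕ} (hp7 : 7 ≤ p) (hpm : p = 4 * m + 3) :
    (p : ℤ) ^ 5 ∣ evenPart p m := by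
  have hcop : IsCoprime ((p : ℤ) ^ 5) (12 : ℤ) := by
    have h2 := isCoprime_prime_pow (p := p) (n := 2) (by omega) (by omega) 5
    have h3 := isCoprime_prime_pow (p := p) (n := 3) (by omega) (by omega) 5
    exact_mod_cast (h2.mul_right h2).mul_right h3
  refine hcop.dvd_of_dvd_mul_left ?_
  have h6 := (pow_dvd_pow (p : ℤ) (show 5 ≤ 6 by norm_num)).trans (pow_six_dvd_evenPart hp7 hpm)
  refine (dvd_add_left ?_).mp h6
  rw [pow_succ (p : ℤ) 4]
  exact mul_dvd_mul (Dvd.intro_left _ rfl) (prime_dvd_Sps (by omega) (by omega))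

end Bernoulli

theorem stmt15 (p : ℕ) [Fact p.Prime] (hp7 : 7 ≤ p) (h3 : p % 4 = 3) :
    (‖(((Gg p p).re : ℚ_[p]) -
        (-((p : ℚ_[p]) ^ 5 / 12) * ((p : ℚ_[p]) - 1) ^ 2 * ((p : ℚ_[p]) - 2) *
          ((bernoulli (p - 3) : ℚ) : ℚ_[p])))‖ ≤ (p : ℝ) ^ (-(6 : ℤ)) ∧
      ‖(((Gg p p).im : ℚ_[p]) +
        (-((p : ℚ_[p]) ^ 5 / 12) * ((p : ℚ_[p]) - 1) ^ 2 * ((p : ℚ_[p]) - 2) *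
          ((bernoulli (p - 3) : ℚ) : ℚ_[p])))‖ ≤ (p : ℝ) ^ (-(6 : ℤ))) ∧
    (p : GaussianInt) ^ 5 ∣ Gg p p := by
  obtain ⟨m, hpm⟩ : ∃ m, p = 4 * m + 3 := ⟨p / 4, by omega⟩
  have hre : (Gg p p).re = evenPart p m := by simp [Gg_self_eq hpm, Ig]
  have him : (Gg p p).im = -evenPart p m := by simp [Gg_self_eq hpm, Ig]
  have hnorm := norm_evenPart_sub_le hp7 hpm
  refine ⟨⟨by rwa [hre], ?_⟩, ?_⟩
  · rw [him, Int.cast_neg, ← norm_neg, neg_add, neg_neg, ← sub_eq_add_neg]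
    exact hnorm
  · rw [Gg_self_eq hpm]
    have hcast := Int.cast_dvd_cast (α := GaussianInt) _ _ (pow_five_dvd_evenPart hp7 hpm)
    push_cast at hcast
    exact hcast.mul_right _
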